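/- arXiv:0708.1503 — 9 statements merged into one kernel-verified Lean document; each statement's English description precedes it below -/
import Mathlib

section
/- For every κ ∈ [0,2] and all p, g ∈ [0,1], p·exp(κ((p−1)² − (g−1)²)) + (1−p)·exp(κ(p² − g²)) ≤ 1. -/
open MeasureTheory ProbabilityTheory in
/-- Hoeffding's lemma for a centred two-point distribution. -/
theorem two_point_hoeffding (p t : ℝ) (h0 : 0 ≤ p) (h1 : p ≤ 1) :
    p * Real.exp (t * (1 - p)) + (1 - p) * Real.exp (t * (-p)) ≤ Real.exp (t ^ 2 / 8) := by
  have h2 : 0 ≤ 1 - p := by linarith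
  let μ : Measure ℝ := ENNReal.ofReal p • Measure.dirac (1 - p) +
    ENNReal.ofReal (1 - p) • Measure.dirac (-p)
  have hint : ∀ f : ℝ → ℝ, ∫ x, f x ∂μ = p * f (1 - p) + (1 - p) * f (-p) := by
    intro f
    have e : ∀ a : ℝ, Integrable f (Measure.dirac a) := fun a =>
      integrable_dirac (by simp)
    rw [integral_add_measure ((e _).smul_measure ENNReal.ofReal_ne_top)
      ((e _).smul_measure ENNReal.ofReal_ne_top)]
    simp [integral_smul_measure, h0, h1]
  haveI : IsProbabilityMeasure μ := ⟨by
    simp only [μ, Measure.add_apply, Measure.smul_apply, measure_univ, smul_eq_mul, mul_one]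
    rw [← ENNReal.ofReal_add h0 h2]; simp⟩
  have hb : ∀ᵐ x ∂μ, id x ∈ Set.Icc (-p) (1 - p) := by
    refine ae_add_measure_iff.2 ⟨Measure.ae_smul_measure ?_ _, Measure.ae_smul_measure ?_ _⟩
    · rw [ae_dirac_eq]; simp
    · rw [ae_dirac_eq]; simp
  have hc : ∫ x, id x ∂μ = 0 := by rw [hint]; simp only [id]; ring
  have h := (hasSubgaussianMGF_of_mem_Icc_of_integral_eq_zero aemeasurable_id hb hc).mgf_le t
  rw [mgf, hint] at h
  simp only [id] at h
  refine h.trans (le_of_eq ?_)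
  have : (1 - p - -p) = 1 := by ring
  rw [this]
  congr 1
  simp
  ring

/-- The one-step quadratic-loss supermartingale inequality: for `κ ∈ [0,2]` and
`p, g ∈ [0,1]`, `p·exp(κ((p−1)² − (g−1)²)) + (1−p)·exp(κ(p² − g²)) ≤ 1`. -/
theorem quadratic_one_step (κ p g : ℝ) (hκ : κ ∈ Set.Icc (0:ℝ) 2)
    (hp : p ∈ Set.Icc (0:ℝ) 1) (hg : g ∈ Set.Icc (0:ℝ) 1) :
    p * Real.exp (κ * ((p - 1) ^ 2 - (g - 1) ^ 2)) +
      (1 - p) * Real.exp (κ * (p ^ 2 - g ^ 2)) ≤ 1 := by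
  have h := two_point_hoeffding p (2 * κ * (g - p)) hp.1 hp.2
  have e1 : κ * ((p - 1) ^ 2 - (g - 1) ^ 2) =
      2 * κ * (g - p) * (1 - p) + -(κ * (g - p) ^ 2) := by ring
  have e2 : κ * (p ^ 2 - g ^ 2) = 2 * κ * (g - p) * (-p) + -(κ * (g - p) ^ 2) := by ring
  have h3 : (2 * κ * (g - p)) ^ 2 / 8 ≤ κ * (g - p) ^ 2 := by
    have := mul_nonneg (mul_nonneg hκ.1 (sub_nonneg.2 hκ.2)) (sq_nonneg (g - p))
    nlinarith
  have h4 := h.trans (Real.exp_le_exp.2 h3)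
  rw [e1, e2, Real.exp_add, Real.exp_add]
  calc _ = (p * Real.exp (2 * κ * (g - p) * (1 - p)) +
        (1 - p) * Real.exp (2 * κ * (g - p) * (-p))) * Real.exp (-(κ * (g - p) ^ 2)) := by ring
    _ ≤ Real.exp (κ * (g - p) ^ 2) * Real.exp (-(κ * (g - p) ^ 2)) :=
        mul_le_mul_of_nonneg_right h4 (Real.exp_pos _).le
    _ = 1 := by rw [← Real.exp_add]; simp
end

section
/- Let t₀, t₁ : [0,1] → ℝ be continuous functions such that p·t₁(p) + (1−p)·t₀(p) ≤ 0 for every p ∈ [0,1]. Then there exists p* ∈ [0,1] such that t₁(p*) ≤ 0 and t₀(p*) ≤ 0. -/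
/-- One-step core of the defensive forecasting lemma (Levin, Takemura): if
`t₀, t₁ : [0,1] → ℝ` are continuous and `p·t₁(p) + (1−p)·t₀(p) ≤ 0` for all
`p ∈ [0,1]`, then some `p* ∈ [0,1]` satisfies `t₁(p*) ≤ 0` and `t₀(p*) ≤ 0`. -/
theorem defensive_one_step (t₀ t₁ : ℝ → ℝ)
    (h₀ : ContinuousOn t₀ (Set.Icc 0 1)) (h₁ : ContinuousOn t₁ (Set.Icc 0 1))
    (h : ∀ p ∈ Set.Icc (0:ℝ) 1, p * t₁ p + (1 - p) * t₀ p ≤ 0) :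
    ∃ p ∈ Set.Icc (0:ℝ) 1, t₁ p ≤ 0 ∧ t₀ p ≤ 0 := by
  have a := h 0 (by simp)
  have b := h 1 (by simp)
  simp only [zero_mul, sub_zero, one_mul, zero_add, sub_self, add_zero] at a b
  by_cases ha : t₁ 0 - t₀ 0 ≤ 0
  · exact ⟨0, by simp, by linarith, a⟩
  by_cases hb : 0 ≤ t₁ 1 - t₀ 1
  · exact ⟨1, by simp, b, by linarith⟩
  push Not at ha hb
  obtain ⟨p, hp, e⟩ := intermediate_value_Icc' (zero_le_one (α := ℝ)) (h₁.sub h₀)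
    ⟨hb.le, ha.le⟩
  have e1 : t₁ p = t₀ p := sub_eq_zero.mp e
  have hc := h p hp
  rw [e1] at hc
  have hd : t₀ p ≤ 0 := by linarith
  exact ⟨p, hp, e1.trans_le hd, hd⟩
end

section
/- Let t₀, t₁ : [0,1] → ℝ be continuous functions. Then there exists p* ∈ [0,1] such that for every q ∈ [0,1], q·t₁(p*) + (1−q)·t₀(p*) ≤ sup_{p ∈ [0,1]} (p·t₁(p) + (1−p)·t₀(p)). -/
/-- Specialization of Ky Fan's minimax theorem used in the defensive forecasting
lemma: for continuous `t₀, t₁ : [0,1] → ℝ` there is `p* ∈ [0,1]` such that for all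
`q ∈ [0,1]`, `q·t₁(p*) + (1−q)·t₀(p*) ≤ sup_{p∈[0,1]} (p·t₁(p) + (1−p)·t₀(p))`. -/
theorem ky_fan_special (t₀ t₁ : ℝ → ℝ)
    (h₀ : ContinuousOn t₀ (Set.Icc 0 1)) (h₁ : ContinuousOn t₁ (Set.Icc 0 1)) :
    ∃ p ∈ Set.Icc (0:ℝ) 1, ∀ q ∈ Set.Icc (0:ℝ) 1,
      q * t₁ p + (1 - q) * t₀ p ≤
        sSup ((fun r => r * t₁ r + (1 - r) * t₀ r) '' Set.Icc 0 1) := by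
  have hc : ContinuousOn (fun r => r * t₁ r + (1 - r) * t₀ r) (Set.Icc (0:ℝ) 1) :=
    (continuousOn_id.mul h₁).add ((continuousOn_const.sub continuousOn_id).mul h₀)
  have hb : BddAbove ((fun r => r * t₁ r + (1 - r) * t₀ r) '' Set.Icc (0:ℝ) 1) :=
    (isCompact_Icc.image_of_continuousOn hc).bddAbove
  -- it suffices to compare with the diagonal value at the same point
  suffices h : ∃ p ∈ Set.Icc (0:ℝ) 1, ∀ q ∈ Set.Icc (0:ℝ) 1,
      q * t₁ p + (1 - q) * t₀ p ≤ p * t₁ p + (1 - p) * t₀ p by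
    obtain ⟨p, hp, h⟩ := h
    exact ⟨p, hp, fun q hq => (h q hq).trans (le_csSup hb ⟨p, hp, rfl⟩)⟩
  by_cases h0 : t₁ 0 - t₀ 0 ≤ 0
  · refine ⟨0, by simp, fun q hq => ?_⟩
    nlinarith [hq.1, mul_nonneg hq.1 (neg_nonneg.2 h0)]
  by_cases h1 : 0 ≤ t₁ 1 - t₀ 1
  · refine ⟨1, by simp, fun q hq => ?_⟩
    nlinarith [mul_nonneg (sub_nonneg.2 hq.2) h1]
  push Not at h0 h1
  obtain ⟨p, hp, hz⟩ := intermediate_value_Icc' (zero_le_one' ℝ) (h₁.sub h₀)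
    (show (0:ℝ) ∈ Set.Icc _ _ from ⟨h1.le, h0.le⟩)
  have hz' : t₁ p = t₀ p := sub_eq_zero.1 hz
  refine ⟨p, hp, fun q _ => ?_⟩
  rw [hz']
  linarith
end

section
/- Let E be a topological space and let S be a forecast-continuous supermartingale: S assigns a real number to each finite history (g₁,p₁,ω₁,…,g_N,p_N,ω_N) with gₙ ∈ E, pₙ ∈ [0,1], ωₙ ∈ {0,1}, it satisfies p_N·S(…,g_N,p_N,1) + (1−p_N)·S(…,g_N,p_N,0) ≤ S(g₁,p₁,ω₁,…,g_{N−1},p_{N−1},ω_{N−1}) for all N and all arguments, and S(g₁,p₁,ω₁,…,g_N,p_N,ω_N) is jointly continuous in (g_N, p_N) ∈ E × [0,1]. Then Forecaster has a strategy — a rule choosing pₙ ∈ [0,1] as a function of the past history (γ₁,p₁,ω₁,…,γ_{n−1},p_{n−1},ω_{n−1}) and the current continuous function γₙ : [0,1] → E — which guarantees S₀ ≥ S₁ ≥ S₂ ≥ ⋯ for all choices of continuous γₙ : [0,1] → E and outcomes ωₙ ∈ {0,1}, where Sₙ = S(γ₁(p₁),p₁,ω₁,…,γₙ(pₙ),pₙ,ωₙ)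 and S₀ = S() is the value at the empty history. -/
theorem exists_good_forecast (a b : Set.Icc (0:ℝ) 1 → ℝ) (c : ℝ)
    (ha : Continuous a) (hb : Continuous b)
    (h : ∀ p : Set.Icc (0:ℝ) 1, (p : ℝ) * a p + (1 - (p : ℝ)) * b p ≤ c) :
    ∃ p, a p ≤ c ∧ b p ≤ c := by
  have h0 := h ⟨0, by simp⟩
  have h1 := h ⟨1, by simp⟩
  simp only [zero_mul, sub_zero, one_mul, zero_add, sub_self, add_zero] at h0 h1
  by_cases ha0 : a ⟨0, by simp⟩ ≤ c
  · exact ⟨_, ha0, h0⟩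
  by_cases hb1 : b ⟨1, by simp⟩ ≤ c
  · exact ⟨_, h1, hb1⟩
  push Not at ha0 hb1
  haveI : PreconnectedSpace (Set.Icc (0:ℝ) 1) := Subtype.preconnectedSpace isPreconnected_Icc
  obtain ⟨p, hp⟩ := intermediate_value_univ₂ hb ha (h0.trans ha0.le) (h1.trans hb1.le)
  have := h p
  rw [hp] at this
  exact ⟨p, by linarith, by linarith⟩

/-- Lemma 1 of the paper (Levin, Takemura): for any forecast-continuous
supermartingale `S` there is a strategy for Forecaster ensuring
`S₀ ≥ S₁ ≥ S₂ ≥ ⋯` whatever continuous second-guessing functions `γₙ : [0,1] → E`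
Expert plays and whatever outcomes `ωₙ ∈ {0,1}` Reality plays.

A history is a list of triples `(gₙ, pₙ, ωₙ) ∈ E × [0,1] × {0,1}`; the process `S`
assigns a real number to every history. A strategy is a function of the past
history (with the experts' functions recorded) and the current function `γₙ`;
`p : ℕ → [0,1]` is required to be the play consistent with the strategy. -/
theorem defensive_forecasting {E : Type*} [TopologicalSpace E]
    (S : List (E × Set.Icc (0:ℝ) 1 × Bool) → ℝ)
    (hsuper : ∀ (h : List (E × Set.Icc (0:ℝ) 1 × Bool)) (g : E) (p : Set.Icc (0:ℝ) 1),
      (p : ℝ) * S (h ++ [(g, p, true)]) + (1 - (p : ℝ)) * S (h ++ [(g, p, false)]) ≤ S h)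
    (hcont : ∀ (h : List (E × Set.Icc (0:ℝ) 1 × Bool)) (ω : Bool),
      Continuous fun gp : E × Set.Icc (0:ℝ) 1 => S (h ++ [(gp.1, gp.2, ω)])) :
    ∃ σ : List (C(Set.Icc (0:ℝ) 1, E) × Set.Icc (0:ℝ) 1 × Bool) →
          C(Set.Icc (0:ℝ) 1, E) → Set.Icc (0:ℝ) 1,
      ∀ (γ : ℕ → C(Set.Icc (0:ℝ) 1, E)) (ω : ℕ → Bool) (p : ℕ → Set.Icc (0:ℝ) 1),
        (∀ n, p n = σ ((List.range n).map fun i => (γ i, p i, ω i)) (γ n)) →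
        ∀ n, S ((List.range (n + 1)).map fun i => (γ i (p i), p i, ω i)) ≤
             S ((List.range n).map fun i => (γ i (p i), p i, ω i)) := by
  classical
  have key : ∀ (h : List (E × Set.Icc (0:ℝ) 1 × Bool)) (g : C(Set.Icc (0:ℝ) 1, E)),
      ∃ p, S (h ++ [(g p, p, true)]) ≤ S h ∧ S (h ++ [(g p, p, false)]) ≤ S h := by
    intro h g
    have hg : Continuous fun p : Set.Icc (0:ℝ) 1 => (g p, p) := by fun_prop
    exact exists_good_forecast (fun p => S (h ++ [(g p, p, true)]))
      (fun p => S (h ++ [(g p, p, false)])) (S h)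
      ((hcont h true).comp hg) ((hcont h false).comp hg) (fun p => hsuper h (g p) p)
  choose τ hτ using key
  refine ⟨fun h g => τ (h.map fun x => (x.1 x.2.1, x.2.1, x.2.2)) g, ?_⟩
  intro γ ω p hp n
  have hn := hp n
  simp only [List.map_map, Function.comp_def] at hn
  have := hτ ((List.range n).map fun i => (γ i (p i), p i, ω i)) (γ n)
  rw [← hn] at this
  rw [List.range_succ, List.map_append, List.map_singleton]
  cases hω : ω n
  · exact this.2
  · exact this.1
end

section
/- In prediction with expert advice under quadratic loss with K experts and second-guessing, there exists a strategy for Learner guaranteeing, for all N ≥ 1 and all k ∈ {1,…,K}, that Σ_{n=1}^N (pₙ − ωₙ)² ≤ Σ_{n=1}^N (γₙᵏ(pₙ) − ωₙ)² + (ln K)/2, for all choices of the experts' continuous functions and of the outcomes. -/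
open MeasureTheory ProbabilityTheory in
lemma aux_hoeffding (p s : ℝ) (h0 : 0 ≤ p) (h1 : p ≤ 1) :
    p * Real.exp (s * (1 - p)) + (1 - p) * Real.exp (s * (0 - p)) ≤ Real.exp (s ^ 2 / 8) := by
  let μ : Measure ℝ := ENNReal.ofReal p • Measure.dirac 1 + ENNReal.ofReal (1 - p) • Measure.dirac 0
  have hμ : IsProbabilityMeasure μ := ⟨by
    simp only [μ, Measure.add_apply, Measure.smul_apply, measure_univ, smul_eq_mul, mul_one]
    rw [← ENNReal.ofReal_add h0 (by linarith)]
    simp⟩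
  have hint : ∀ f : ℝ → ℝ, ∫ x, f x ∂μ = p * f 1 + (1 - p) * f 0 := by
    intro f
    have i1 : Integrable f (ENNReal.ofReal p • Measure.dirac (1:ℝ)) :=
      (integrable_dirac (by simp)).smul_measure ENNReal.ofReal_ne_top
    have i2 : Integrable f (ENNReal.ofReal (1 - p) • Measure.dirac (0:ℝ)) :=
      (integrable_dirac (by simp)).smul_measure ENNReal.ofReal_ne_top
    simp only [μ]
    rw [integral_add_measure i1 i2, integral_smul_measure, integral_smul_measure]
    simp [ENNReal.toReal_ofReal h0, ENNReal.toReal_ofReal (sub_nonneg.2 h1)]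
  have hb : ∀ᵐ x ∂μ, id x ∈ Set.Icc (0:ℝ) 1 := by
    rw [ae_iff]
    have : {a : ℝ | ¬ id a ∈ Set.Icc (0:ℝ) 1} = (Set.Icc (0:ℝ) 1)ᶜ := rfl
    rw [this]
    simp [μ]
  have h := (hasSubgaussianMGF_of_mem_Icc (μ := μ) (X := id) aemeasurable_id hb).mgf_le s
  simp only [mgf, hint] at h
  refine le_trans (le_of_eq ?_) (h.trans (le_of_eq ?_))
  · simp
  · congr 1
    simp
    ring

lemma aux_step (p g : ℝ) (h0 : 0 ≤ p) (h1 : p ≤ 1) :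
    p * Real.exp (2 * ((p - 1) ^ 2 - (g - 1) ^ 2)) +
      (1 - p) * Real.exp (2 * ((p - 0) ^ 2 - (g - 0) ^ 2)) ≤ 1 := by
  have h := aux_hoeffding p (4 * (g - p)) h0 h1
  have e1 : 2 * ((p - 1) ^ 2 - (g - 1) ^ 2) = 4 * (g - p) * (1 - p) + -((4 * (g - p)) ^ 2 / 8) := by
    ring
  have e2 : 2 * ((p - 0) ^ 2 - (g - 0) ^ 2) = 4 * (g - p) * (0 - p) + -((4 * (g - p)) ^ 2 / 8) := by
    ring
  rw [e1, e2, Real.exp_add, Real.exp_add, ← mul_assoc, ← mul_assoc, ← add_mul]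
  refine (mul_le_mul_of_nonneg_right h (Real.exp_pos _).le).trans (le_of_eq ?_)
  rw [← Real.exp_add]; simp

lemma aux_exists {K : ℕ} (w : Fin K → ℝ) (hw : ∀ k, 0 ≤ w k)
    (g : Fin K → C(Set.Icc (0:ℝ) 1, Set.Icc (0:ℝ) 1)) :
    ∃ p : Set.Icc (0:ℝ) 1, ∀ b : Bool,
      ∑ k, w k * Real.exp (2 * (((p:ℝ) - (if b then 1 else 0)) ^ 2 -
        ((g k p : ℝ) - (if b then 1 else 0)) ^ 2)) ≤ ∑ k, w k := by
  let F : ℝ → Set.Icc (0:ℝ) 1 → ℝ := fun o p =>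
    ∑ k, w k * Real.exp (2 * (((p:ℝ) - o) ^ 2 - ((g k p : ℝ) - o) ^ 2))
  have hc : ∀ o, Continuous (F o) := by
    intro o
    simp only [F]
    fun_prop
  have key : ∀ p : Set.Icc (0:ℝ) 1, (p:ℝ) * F 1 p + (1 - p) * F 0 p ≤ ∑ k, w k := by
    intro p
    simp only [F, Finset.mul_sum, ← Finset.sum_add_distrib]
    refine Finset.sum_le_sum fun k _ => ?_
    have := mul_le_mul_of_nonneg_left (aux_step p (g k p) p.2.1 p.2.2) (hw k)
    linarith
  suffices h : ∃ p, F 1 p ≤ ∑ k, w k ∧ F 0 p ≤ ∑ k, w k by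
    obtain ⟨p, hp1, hp0⟩ := h
    refine ⟨p, fun b => ?_⟩
    cases b
    · simpa [F] using hp0
    · simpa [F] using hp1
  have k0 := key 0
  have k1 := key 1
  simp only [Set.Icc.coe_zero, Set.Icc.coe_one] at k0 k1
  by_cases c0 : F 1 0 ≤ F 0 0
  · exact ⟨0, by linarith, by linarith⟩
  by_cases c1 : F 0 1 ≤ F 1 1
  · exact ⟨1, by linarith, by linarith⟩
  push Not at c0 c1
  obtain ⟨p, hp⟩ := mem_range_of_exists_le_of_exists_ge ((hc 1).sub (hc 0)) (c := 0)
    ⟨1, by simp only [Pi.sub_apply]; linarith⟩ ⟨0, by simp only [Pi.sub_apply]; linarith⟩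
  have hp' : F 1 p = F 0 p := by simpa [sub_eq_zero] using hp
  have kp := key p
  rw [hp'] at kp
  exact ⟨p, by linarith, by linarith⟩


/-- Theorem 1 of the paper: in prediction with expert advice under quadratic loss
with `K` continuous second-guessing experts, Learner has a strategy guaranteeing
`L_N ≤ L_N^k + (ln K)/2` for all `N ≥ 1` and all experts `k`.

At round `n` each expert `k` announces a continuous `γₙᵏ : [0,1] → [0,1]`, Learner
announces `pₙ ∈ [0,1]`, Reality announces `ωₙ ∈ {0,1}`. A strategy maps the past
history together with the current tuple of expert functions to a prediction;
`p : ℕ → [0,1]` is required to be the play consistent with the strategy. -/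
theorem expert_advice_quadratic (K : ℕ) (hK : 1 ≤ K) :
    ∃ σ : List ((Fin K → C(Set.Icc (0:ℝ) 1, Set.Icc (0:ℝ) 1)) × Set.Icc (0:ℝ) 1 × Bool) →
          (Fin K → C(Set.Icc (0:ℝ) 1, Set.Icc (0:ℝ) 1)) → Set.Icc (0:ℝ) 1,
      ∀ (γ : ℕ → Fin K → C(Set.Icc (0:ℝ) 1, Set.Icc (0:ℝ) 1)) (ω : ℕ → Bool)
        (p : ℕ → Set.Icc (0:ℝ) 1),
        (∀ n, p n = σ ((List.range n).map fun i => (γ i, p i, ω i)) (γ n)) →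
        ∀ N : ℕ, 1 ≤ N → ∀ k : Fin K,
          (∑ n ∈ Finset.range N, ((p n : ℝ) - (if ω n then 1 else 0)) ^ 2) ≤
            (∑ n ∈ Finset.range N, ((γ n k (p n) : ℝ) - (if ω n then 1 else 0)) ^ 2) +
              Real.log K / 2 := by
  classical
  let w : List ((Fin K → C(Set.Icc (0:ℝ) 1, Set.Icc (0:ℝ) 1)) × Set.Icc (0:ℝ) 1 × Bool) →
      Fin K → ℝ := fun l k => Real.exp (2 * (l.map fun x =>
        ((x.2.1:ℝ) - (if x.2.2 then 1 else 0)) ^ 2 -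
          ((x.1 k x.2.1 : ℝ) - (if x.2.2 then 1 else 0)) ^ 2).sum)
  choose σ hσ using fun l g => aux_exists (w l) (fun k => (Real.exp_pos _).le) g
  refine ⟨σ, fun γ ω p hp N _ k => ?_⟩
  let H : ℕ → List ((Fin K → C(Set.Icc (0:ℝ) 1, Set.Icc (0:ℝ) 1)) × Set.Icc (0:ℝ) 1 × Bool) :=
    fun n => (List.range n).map fun i => (γ i, p i, ω i)
  have hw : ∀ n k, w (H n) k = Real.exp (2 * ∑ i ∈ Finset.range n,
      (((p i:ℝ) - (if ω i then 1 else 0)) ^ 2 -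
        ((γ i k (p i) : ℝ) - (if ω i then 1 else 0)) ^ 2)) := by
    intro n k
    simp only [w, H, List.map_map]
    rfl
  have hW : ∀ n, ∑ k, w (H n) k ≤ K := by
    intro n
    induction n with
    | zero => simp [hw]
    | succ n ih =>
      refine le_trans (le_of_eq ?_) ((hσ (H n) (γ n) (ω n)).trans ih)
      refine Finset.sum_congr rfl fun k _ => ?_
      rw [← hp n, hw, hw, Finset.sum_range_succ, mul_add, Real.exp_add]
  have h1 : w (H N) k ≤ K :=
    (Finset.single_le_sum (f := w (H N)) (fun j _ => (Real.exp_pos _).le) (Finset.mem_univ k)).trans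
      (hW N)
  rw [hw] at h1
  have h2 := Real.log_le_log (Real.exp_pos _) h1
  rw [Real.log_exp, Finset.sum_sub_distrib] at h2
  linarith
end

section
/- Fix κ ∈ [0,1] and define the log loss λ(1,p) = −ln p and λ(0,p) = −ln(1−p). For every N ≥ 1, all sequences p₁,…,p_N ∈ (0,1), g₁,…,g_N ∈ (0,1), and ω₁,…,ω_{N−1} ∈ {0,1}, define S_N(ω) = exp(κ·[Σ_{n=1}^{N−1}(λ(ωₙ,pₙ) − λ(ωₙ,gₙ)) + (λ(ω,p_N) − λ(ω,g_N))]) for ω ∈ {0,1}, and S_{N−1} = exp(κ·Σ_{n=1}^{N−1}(λ(ωₙ,pₙ) − λ(ωₙ,gₙ))). Then p_N·S_N(1) + (1−p_N)·S_N(0) ≤ S_{N−1}. -/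
/-- The log loss function: `λ(1,p) = −ln p`, `λ(0,p) = −ln(1−p)`. -/
noncomputable def logLoss (b : Bool) (x : ℝ) : ℝ :=
  if b then -Real.log x else -Real.log (1 - x)

theorem log_step_aux (κ a b : ℝ) (hκ : κ ∈ Set.Icc (0:ℝ) 1) (ha : 0 < a) (hb : 0 < b) :
    a * Real.exp (κ * (-Real.log a - -Real.log b)) ≤ a + κ * (b - a) := by
  have h := convexOn_exp.2 (Set.mem_univ (0:ℝ)) (Set.mem_univ (-Real.log a - -Real.log b))
    (sub_nonneg.2 hκ.2) hκ.1 (by ring)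
  simp only [smul_eq_mul, mul_zero, zero_add, Real.exp_zero, mul_one] at h
  have e : Real.exp (-Real.log a - -Real.log b) = b / a := by
    rw [show -Real.log a - -Real.log b = Real.log b - Real.log a by ring, Real.exp_sub,
      Real.exp_log ha, Real.exp_log hb]
  rw [e] at h
  calc _ ≤ a * (1 - κ + κ * (b / a)) := mul_le_mul_of_nonneg_left h ha.le
    _ = a + κ * (b - a) := by field_simp; ring

/-- Lemma 3 of the paper: the exponentiated cumulative log-loss difference process
is a supermartingale, for any `κ ∈ [0,1]`.  Sequences are indexed from `0`, so
`p 0, …, p (N−1)` are the forecasts, `g 0, …, g (N−1)` the expert's predictions,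
and `ω 0, …, ω (N−2)` the past outcomes. -/
theorem log_supermartingale (κ : ℝ) (hκ : κ ∈ Set.Icc (0:ℝ) 1)
    (N : ℕ) (hN : 1 ≤ N) (p g : ℕ → ℝ)
    (hp : ∀ n, p n ∈ Set.Ioo (0:ℝ) 1) (hg : ∀ n, g n ∈ Set.Ioo (0:ℝ) 1)
    (ω : ℕ → Bool) :
    p (N - 1) *
        Real.exp (κ * ((∑ n ∈ Finset.range (N - 1),
            (logLoss (ω n) (p n) - logLoss (ω n) (g n))) +
          (logLoss true (p (N - 1)) - logLoss true (g (N - 1))))) +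
      (1 - p (N - 1)) *
        Real.exp (κ * ((∑ n ∈ Finset.range (N - 1),
            (logLoss (ω n) (p n) - logLoss (ω n) (g n))) +
          (logLoss false (p (N - 1)) - logLoss false (g (N - 1))))) ≤
    Real.exp (κ * ∑ n ∈ Finset.range (N - 1),
      (logLoss (ω n) (p n) - logLoss (ω n) (g n))) := by
  obtain ⟨p0, p1⟩ := hp (N - 1)
  obtain ⟨g0, g1⟩ := hg (N - 1)
  have h1 := log_step_aux κ _ _ hκ p0 g0
  have h2 := log_step_aux κ _ _ hκ (sub_pos.2 p1) (sub_pos.2 g1)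
  generalize (∑ n ∈ Finset.range (N - 1), (logLoss (ω n) (p n) - logLoss (ω n) (g n))) = T
  simp only [logLoss, if_true, Bool.false_eq_true, if_false, mul_add κ T, Real.exp_add]
  have h3 := mul_le_mul_of_nonneg_left (add_le_add h1 h2) (Real.exp_pos (κ * T)).le
  linarith
end

section
/- In prediction with expert advice under log loss with K experts and second-guessing, there exists a strategy for Learner guaranteeing, for all N ≥ 1 and all k ∈ {1,…,K}, that Σ_{n=1}^N λ(ωₙ,pₙ) ≤ Σ_{n=1}^N λ(ωₙ,γₙᵏ(pₙ)) + ln K, for all choices of the experts' continuous functions and of the outcomes, where λ(1,p) = −ln p and λ(0,p) = −ln(1−p) (with values in (−∞,∞]). -/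
/-- The log loss function with values in `(−∞,∞]`: `λ(1,p) = −ln p` and
`λ(0,p) = −ln(1−p)`, equal to `⊤` when the argument of `ln` is `0`. -/
noncomputable def eLogLoss (b : Bool) (x : ℝ) : EReal :=
  if b then (if x = 0 then ⊤ else ((-Real.log x : ℝ) : EReal))
  else (if x = 1 then ⊤ else ((-Real.log (1 - x) : ℝ) : EReal))

/-- Likelihood assigned to outcome `b` by prediction `x`. -/
noncomputable def auxLik (b : Bool) (x : ℝ) : ℝ := if b then x else 1 - x

/-- Extended negative logarithm. -/
noncomputable def auxNegLog (x : ℝ) : EReal :=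
  if x = 0 then ⊤ else ((-Real.log x : ℝ) : EReal)

lemma eLogLoss_eq_aux (b : Bool) (x : ℝ) : eLogLoss b x = auxNegLog (auxLik b x) := by
  cases b
  · have : (1 - x = 0) ↔ x = 1 := by constructor <;> intro h <;> linarith
    simp [eLogLoss, auxNegLog, auxLik, this]
  · simp [eLogLoss, auxNegLog, auxLik]

lemma auxNegLog_ne_bot (x : ℝ) : auxNegLog x ≠ ⊥ := by
  unfold auxNegLog
  split_ifs
  · simp
  · exact EReal.coe_ne_bot _

lemma auxNegLog_mul (x y : ℝ) : auxNegLog (x * y) = auxNegLog x + auxNegLog y := by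
  by_cases hx : x = 0
  · subst hx
    have h := EReal.top_add_of_ne_bot (auxNegLog_ne_bot y)
    have h0 : auxNegLog 0 = ⊤ := by simp [auxNegLog]
    rw [zero_mul, h0, h]
  by_cases hy : y = 0
  · subst hy
    have h := EReal.add_top_of_ne_bot (auxNegLog_ne_bot x)
    have h0 : auxNegLog 0 = ⊤ := by simp [auxNegLog]
    rw [mul_zero, h0, h]
  have hxy : x * y ≠ 0 := mul_ne_zero hx hy
  simp only [auxNegLog, hx, hy, hxy, if_false]
  rw [Real.log_mul hx hy, ← EReal.coe_add]
  congr 1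
  ring

lemma auxNegLog_sum (f : ℕ → ℝ) (N : ℕ) :
    ∑ n ∈ Finset.range N, auxNegLog (f n) = auxNegLog (∏ n ∈ Finset.range N, f n) := by
  induction N with
  | zero => simp [auxNegLog]
  | succ n ih => rw [Finset.sum_range_succ, Finset.prod_range_succ, auxNegLog_mul, ih]

lemma auxNegLog_le (K W P : ℝ) (hK : 0 < K) (hW : 0 ≤ W) (h : W ≤ K * P) :
    auxNegLog P ≤ auxNegLog W + ((Real.log K : ℝ) : EReal) := by
  by_cases hW0 : W = 0
  · have h0 : auxNegLog W = ⊤ := by simp [auxNegLog, hW0]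
    rw [h0, EReal.top_add_of_ne_bot (EReal.coe_ne_bot _)]
    exact le_top
  have hWp : 0 < W := lt_of_le_of_ne hW (Ne.symm hW0)
  have hP : 0 < P := by
    by_contra hn
    nlinarith [not_lt.mp hn]
  simp only [auxNegLog, hW0, hP.ne', if_false]
  rw [← EReal.coe_add, EReal.coe_le_coe_iff]
  have := Real.log_le_log hWp h
  rw [Real.log_mul hK.ne' hP.ne'] at this
  linarith

lemma auxLik_nonneg (b : Bool) (x : Set.Icc (0:ℝ) 1) : 0 ≤ auxLik b x := by
  have h1 := x.2.1
  have h2 := x.2.2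
  cases b <;> simp [auxLik, h1, h2]

lemma aux_fixed {K : ℕ} (W : Fin K → ℝ) (hW : ∀ k, 0 ≤ W k)
    (g : Fin K → C(Set.Icc (0:ℝ) 1, Set.Icc (0:ℝ) 1)) :
    ∃ p : Set.Icc (0:ℝ) 1, ∑ k, W k * ((g k p : ℝ) - p) = 0 := by
  have hc : Continuous fun p : Set.Icc (0:ℝ) 1 => ∑ k, W k * ((g k p : ℝ) - p) := by
    fun_prop
  have h := intermediate_value_univ (1 : Set.Icc (0:ℝ) 1) 0 hc
  have h0 : (0:ℝ) ∈ Set.Icc (∑ k, W k * ((g k 1 : ℝ) - (1 : Set.Icc (0:ℝ) 1)))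
      (∑ k, W k * ((g k 0 : ℝ) - (0 : Set.Icc (0:ℝ) 1))) := by
    constructor
    · apply Finset.sum_nonpos
      intro k _
      apply mul_nonpos_of_nonneg_of_nonpos (hW k)
      have := (g k 1).2.2
      simpa using this
    · apply Finset.sum_nonneg
      intro k _
      apply mul_nonneg (hW k)
      have := (g k 0).2.1
      simpa using this
  exact h h0

/-- Weight of expert `k` after a history. -/
noncomputable def auxW {K : ℕ}
    (h : List ((Fin K → C(Set.Icc (0:ℝ) 1, Set.Icc (0:ℝ) 1)) × Set.Icc (0:ℝ) 1 × Bool))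
    (k : Fin K) : ℝ := (h.map fun t => auxLik t.2.2 (t.1 k t.2.1)).prod

lemma auxW_nonneg {K : ℕ}
    (h : List ((Fin K → C(Set.Icc (0:ℝ) 1, Set.Icc (0:ℝ) 1)) × Set.Icc (0:ℝ) 1 × Bool))
    (k : Fin K) : 0 ≤ auxW h k := by
  apply List.prod_nonneg
  intro a ha
  obtain ⟨t, _, rfl⟩ := List.mem_map.mp ha
  exact auxLik_nonneg _ _

/-- Theorem 2 of the paper: in prediction with expert advice under log loss with
`K` continuous second-guessing experts, Learner has a strategy guaranteeing
`L_N ≤ L_N^k + ln K` for all `N ≥ 1` and all experts `k`.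

At round `n` each expert `k` announces a continuous `γₙᵏ : [0,1] → [0,1]`, Learner
announces `pₙ ∈ [0,1]`, Reality announces `ωₙ ∈ {0,1}`. A strategy maps the past
history together with the current tuple of expert functions to a prediction;
`p : ℕ → [0,1]` is required to be the play consistent with the strategy. -/
theorem expert_advice_log (K : ℕ) (hK : 1 ≤ K) :
    ∃ σ : List ((Fin K → C(Set.Icc (0:ℝ) 1, Set.Icc (0:ℝ) 1)) × Set.Icc (0:ℝ) 1 × Bool) →
          (Fin K → C(Set.Icc (0:ℝ) 1, Set.Icc (0:ℝ) 1)) → Set.Icc (0:ℝ) 1,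
      ∀ (γ : ℕ → Fin K → C(Set.Icc (0:ℝ) 1, Set.Icc (0:ℝ) 1)) (ω : ℕ → Bool)
        (p : ℕ → Set.Icc (0:ℝ) 1),
        (∀ n, p n = σ ((List.range n).map fun i => (γ i, p i, ω i)) (γ n)) →
        ∀ N : ℕ, 1 ≤ N → ∀ k : Fin K,
          (∑ n ∈ Finset.range N, eLogLoss (ω n) (p n : ℝ)) ≤
            (∑ n ∈ Finset.range N, eLogLoss (ω n) ((γ n k (p n) : ℝ))) +
              ((Real.log K : ℝ) : EReal) := by
  classical
  choose s hs using fun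
    (h : List ((Fin K → C(Set.Icc (0:ℝ) 1, Set.Icc (0:ℝ) 1)) × Set.Icc (0:ℝ) 1 × Bool))
    (g : Fin K → C(Set.Icc (0:ℝ) 1, Set.Icc (0:ℝ) 1)) =>
    aux_fixed (auxW h) (auxW_nonneg h) g
  refine ⟨s, ?_⟩
  intro γ ω p hp N _ k
  have hWn : ∀ (n : ℕ) (j : Fin K),
      auxW ((List.range n).map fun i => (γ i, p i, ω i)) j
        = ∏ i ∈ Finset.range n, auxLik (ω i) (γ i j (p i)) := by
    intro n j
    induction n with
    | zero => simp [auxW]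
    | succ n ih =>
      rw [Finset.prod_range_succ, ← ih]
      simp [auxW, List.range_succ]
  have hfix : ∀ n, ∑ j, (∏ i ∈ Finset.range n, auxLik (ω i) (γ i j (p i))) *
      ((γ n j (p n) : ℝ) - p n) = 0 := by
    intro n
    have h := hs ((List.range n).map fun i => (γ i, p i, ω i)) (γ n)
    rw [← hp n] at h
    simpa only [hWn] using h
  have htot : ∀ n, ∑ j : Fin K, (∏ i ∈ Finset.range n, auxLik (ω i) (γ i j (p i)))
      = K * ∏ i ∈ Finset.range n, auxLik (ω i) (p i) := by
    intro n
    induction n with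
    | zero => simp
    | succ n ih =>
      have hf := hfix n
      simp only [Finset.prod_range_succ]
      rw [← mul_assoc, ← ih, Finset.sum_mul, ← sub_eq_zero, ← Finset.sum_sub_distrib]
      cases hω : ω n
      · rw [← neg_eq_zero, ← Finset.sum_neg_distrib]
        refine Eq.trans ?_ hf
        apply Finset.sum_congr rfl
        intro j _
        simp only [auxLik, Bool.false_eq_true, if_false]
        ring
      · refine Eq.trans ?_ hf
        apply Finset.sum_congr rfl
        intro j _
        simp only [auxLik, if_true]
        ring
  simp only [eLogLoss_eq_aux, auxNegLog_sum]
  have hnn : ∀ j : Fin K, 0 ≤ ∏ i ∈ Finset.range N, auxLik (ω i) (γ i j (p i)) :=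
    fun j => Finset.prod_nonneg fun i _ => auxLik_nonneg _ _
  apply auxNegLog_le
  · exact_mod_cast hK
  · exact hnn k
  · rw [← htot N]
    exact Finset.single_le_sum (f := fun j : Fin K =>
      ∏ i ∈ Finset.range N, auxLik (ω i) (γ i j (p i))) (fun j _ => hnn j) (Finset.mem_univ k)
end

section
/- Let Ω be a set, Γ a compact topological space, and λ : Ω × Γ → ℝ a loss function bounded below such that γ ↦ λ(ω,γ) is continuous for each ω ∈ Ω. Let η* > 0 be a real number such that the game (Ω,Γ,λ) is η-mixable for every η with 0 < η < η*. Then the game is η*-mixable, where η-mixability means: for all γ₁, γ₂ ∈ Γ and α ∈ [0,1] there exists δ ∈ Γ such that exp(−η·λ(ω,δ)) ≥ α·exp(−η·λ(ω,γ₁)) + (1−α)·exp(−η·λ(ω,γ₂)) for all ω ∈ Ω. -/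
/-- By compactness of the decision space, mixability is attained at the supremum
of the learning rates: if the game is `η`-mixable for every `0 < η < η*`, then it
is `η*`-mixable. -/
theorem mixable_at_sup {Ω Γ : Type*} [TopologicalSpace Γ] [CompactSpace Γ]
    (lam : Ω → Γ → ℝ) (hcont : ∀ ω : Ω, Continuous fun γ => lam ω γ)
    (hbdd : ∃ c : ℝ, ∀ (ω : Ω) (γ : Γ), c ≤ lam ω γ)
    (ηstar : ℝ) (hηstar : 0 < ηstar)
    (hmix : ∀ η : ℝ, 0 < η → η < ηstar →
      ∀ γ₁ γ₂ : Γ, ∀ α ∈ Set.Icc (0:ℝ) 1, ∃ δ : Γ, ∀ ω : Ω,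
        α * Real.exp (-η * lam ω γ₁) + (1 - α) * Real.exp (-η * lam ω γ₂) ≤
          Real.exp (-η * lam ω δ)) :
    ∀ γ₁ γ₂ : Γ, ∀ α ∈ Set.Icc (0:ℝ) 1, ∃ δ : Γ, ∀ ω : Ω,
      α * Real.exp (-ηstar * lam ω γ₁) + (1 - α) * Real.exp (-ηstar * lam ω γ₂) ≤
        Real.exp (-ηstar * lam ω δ) := by
  intro γ₁ γ₂ α hα
  have h : ∀ η : ℝ, ∃ δ : Γ, 0 < η → η < ηstar → ∀ ω : Ω,
        α * Real.exp (-η * lam ω γ₁) + (1 - α) * Real.exp (-η * lam ω γ₂) ≤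
          Real.exp (-η * lam ω δ) := by
    intro η
    by_cases h0 : 0 < η ∧ η < ηstar
    · obtain ⟨δ, hδ⟩ := hmix η h0.1 h0.2 γ₁ γ₂ α hα
      exact ⟨δ, fun _ _ => hδ⟩
    · exact ⟨γ₁, fun h1 h2 => absurd ⟨h1, h2⟩ h0⟩
  choose δ hδ using h
  let U : Ultrafilter ℝ := Ultrafilter.of (nhdsWithin ηstar (Set.Iio ηstar))
  have hU : (U : Filter ℝ) ≤ nhdsWithin ηstar (Set.Iio ηstar) := Ultrafilter.of_le _
  obtain ⟨d, -, hd⟩ := isCompact_univ.ultrafilter_le_nhds (U.map δ) (by simp)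
  have hd' : Filter.Tendsto δ U (nhds d) := hd
  have hid : Filter.Tendsto (fun η : ℝ => -η) U (nhds (-ηstar)) :=
    (Filter.tendsto_id.mono_left (hU.trans nhdsWithin_le_nhds)).neg
  refine ⟨d, fun ω => ?_⟩
  have hl := ((hcont ω).tendsto d).comp hd'
  have hc : ∀ γ, Filter.Tendsto (fun η : ℝ => Real.exp (-η * lam ω γ)) U
      (nhds (Real.exp (-ηstar * lam ω γ))) := fun γ =>
    (Real.continuous_exp.tendsto _).comp (hid.mul_const _)
  have hr : Filter.Tendsto (fun η : ℝ => Real.exp (-η * lam ω (δ η))) U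
      (nhds (Real.exp (-ηstar * lam ω d))) :=
    (Real.continuous_exp.tendsto _).comp (hid.mul hl)
  refine le_of_tendsto_of_tendsto (((hc γ₁).const_mul α).add ((hc γ₂).const_mul (1 - α))) hr ?_
  have hev : ∀ᶠ η in nhdsWithin ηstar (Set.Iio ηstar), 0 < η ∧ η < ηstar :=
    Filter.Eventually.and (nhdsWithin_le_nhds (lt_mem_nhds hηstar)) self_mem_nhdsWithin
  filter_upwards [hU hev] with η hη
  exact hδ η hη.1 hη.2 ω
end

section
/- Let Ω be a set, Γ a set, λ : Ω × Γ → (−∞,∞] a loss function, K ≥ 1, and a, a′ > 0. If Learner has a winning strategy in the global game G_K(a), then for every m ≥ 1 Learner has a winning strategy in the global game G_{K^m}(m·a). In particular, Learner has a winning strategy in G_{K²}(2a). -/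
/-- Learner has a winning strategy in the global game `G_K(a)`: there is a rule
choosing Learner's decision from the history so far and the current expert
decisions such that, for every play `γ` of the `K` experts, every play `ω` of
Reality, and the consistent play `g` of Learner, the cumulative losses satisfy
`L_N ≤ L_N^k + a` for all `N ≥ 1` and all experts `k`. -/
def LearnerWins {Ω Γ : Type*} (lam : Ω → Γ → EReal) (K : ℕ) (a : ℝ) : Prop :=
  ∃ σ : List ((Fin K → Γ) × Γ × Ω) → (Fin K → Γ) → Γ,
    ∀ (γ : ℕ → Fin K → Γ) (ω : ℕ → Ω) (g : ℕ → Γ),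
      (∀ n, g n = σ ((List.range n).map fun i => (γ i, g i, ω i)) (γ n)) →
      ∀ N : ℕ, 1 ≤ N → ∀ k : Fin K,
        (∑ n ∈ Finset.range N, lam (ω n) (g n)) ≤
          (∑ n ∈ Finset.range N, lam (ω n) (γ n k)) + (a : EReal)

/-- One step of the simulation: update the histories of the inner strategies (one per
group of experts) and of the outer strategy. -/
def compStep {Ω Γ : Type*} {A B : ℕ}
    (σ₁ : List ((Fin A → Γ) × Γ × Ω) → (Fin A → Γ) → Γ)
    (S : (Fin B → List ((Fin A → Γ) × Γ × Ω)) × List ((Fin B → Γ) × Γ × Ω))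
    (p : (Fin (A * B) → Γ) × Γ × Ω) :
    (Fin B → List ((Fin A → Γ) × Γ × Ω)) × List ((Fin B → Γ) × Γ × Ω) :=
  (fun j => S.1 j ++ [(fun i => p.1 (finProdFinEquiv (i, j)),
      σ₁ (S.1 j) (fun i => p.1 (finProdFinEquiv (i, j))), p.2.2)],
   S.2 ++ [(fun j => σ₁ (S.1 j) (fun i => p.1 (finProdFinEquiv (i, j))), p.2.1, p.2.2)])

theorem LearnerWins.comp {Ω Γ : Type*} {lam : Ω → Γ → EReal} {A B : ℕ} {a b : ℝ}
    (h₁ : LearnerWins lam A a) (h₂ : LearnerWins lam B b) :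
    LearnerWins lam (A * B) (a + b) := by
  obtain ⟨σ₁, h₁⟩ := h₁
  obtain ⟨σ₂, h₂⟩ := h₂
  refine ⟨fun H γ => σ₂ (H.foldl (compStep σ₁) (fun _ => [], [])).2
    (fun j => σ₁ ((H.foldl (compStep σ₁) (fun _ => [], [])).1 j)
      (fun i => γ (finProdFinEquiv (i, j)))), ?_⟩
  intro γ ω g hg N hN k
  obtain ⟨⟨i, j⟩, rfl⟩ := finProdFinEquiv.surjective k
  let S : ℕ → (Fin B → List ((Fin A → Γ) × Γ × Ω)) × List ((Fin B → Γ) × Γ × Ω) :=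
    fun n => ((List.range n).map fun i => (γ i, g i, ω i)).foldl (compStep σ₁) (fun _ => [], [])
  let d : ℕ → Fin B → Γ := fun n j => σ₁ ((S n).1 j) (fun i => γ n (finProdFinEquiv (i, j)))
  have hS : ∀ n, S (n + 1) = compStep σ₁ (S n) (γ n, g n, ω n) := by
    intro n
    simp [S, List.range_succ]
  have e₁ : ∀ n j, (S n).1 j =
      (List.range n).map fun t => (fun i => γ t (finProdFinEquiv (i, j)), d t j, ω t) := by
    intro n j
    induction n with
    | zero => rfl
    | succ n ih =>
      rw [List.range_succ, List.map_append, ← ih, hS]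
      rfl
  have e₂ : ∀ n, (S n).2 = (List.range n).map fun t => (d t, g t, ω t) := by
    intro n
    induction n with
    | zero => rfl
    | succ n ih =>
      rw [List.range_succ, List.map_append, ← ih, hS]
      rfl
  have q₁ := h₁ (fun t i => γ t (finProdFinEquiv (i, j))) ω (fun t => d t j)
    (fun n => by rw [← e₁ n j]) N hN i
  have q₂ := h₂ d ω g (fun n => by rw [← e₂ n]; exact hg n) N hN j
  refine q₂.trans ((add_le_add q₁ le_rfl).trans ?_)
  rw [EReal.coe_add, add_assoc]

/-- The expert-pool composition step in the proof of Watkins's theorem: if Learner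
has a winning strategy in the global game `G_K(a)`, then for every `m ≥ 1` Learner
has a winning strategy in `G_{K^m}(m·a)`; in particular in `G_{K²}(2a)`.  The loss
function takes values in `(−∞,∞]`. -/
theorem global_game_composition {Ω Γ : Type*} (lam : Ω → Γ → EReal)
    (hbot : ∀ (ω : Ω) (γ : Γ), ⊥ < lam ω γ)
    (K : ℕ) (hK : 1 ≤ K) (a : ℝ) (ha : 0 < a)
    (h : LearnerWins lam K a) :
    (∀ m : ℕ, 1 ≤ m → LearnerWins lam (K ^ m) ((m : ℝ) * a)) ∧
      LearnerWins lam (K ^ 2) (2 * a) := by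
  have key : ∀ m : ℕ, 1 ≤ m → LearnerWins lam (K ^ m) ((m : ℝ) * a) := by
    intro m hm
    induction m, hm using Nat.le_induction with
    | base => simpa using h
    | succ m hm ih =>
      have := ih.comp h
      rw [pow_succ, Nat.cast_succ, add_mul, one_mul]
      exact this
  refine ⟨key, ?_⟩
  simpa using key 2 (by norm_num)
end
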